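/- Let p be a prime, (A ⊆ B) a pair of finite abelian p-groups, and 1 ≤ r ≤ m−2 integers. For u ≥ 0 set M_u = B/(p²A + p(A ∩ p^uB)), and for u ≥ 1, v ≥ 1 set d(u,v) = dim_{𝔽_p}(p^{v−1}M_u/p^vM_u) − dim_{𝔽_p}(p^{v−1}M_{u−1}/p^vM_{u−1}). Let b = Σ_{v=r+2}^{m} Σ_{u=1}^{r} d(u,v). Then the cardinalities of morphism sets of pairs satisfy #Hom((A⊆B), T_2^{m,r}) · #Hom((A⊆B), P_1^{r+1}) = p^b · #Hom((A⊆B), P_2^{r+1}) · #Hom((A⊆B), P_0^r) · #Hom((A⊆B), P_1^m). -/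

import Mathlib

/-- Multiplication by `k` as an additive endomorphism of `M`. -/
def pMul (k : ℕ) (M : Type) [AddCommGroup M] : M →+ M :=
  AddMonoidHom.mk' (fun x => k • x) fun a b => smul_add k a b

/-!
Homomorphisms `B → ℤ/n` are governed by duality: those vanishing on `H ≤ B` are counted by
`[B : H + nB]`, and a homomorphism `A → ℤ/n` extends to `B` if and only if it vanishes on `A ∩ nB`.

A morphism to a picket `P_ℓ^j` is a homomorphism `B → ℤ/p^j` killing `p^ℓ A`. The subgroup of the
bipicket is the graph of a surjection `p^{m-2}(ℤ/p^m) → p^{r-1}(ℤ/p^r)` with kernel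
`p^{m-1}(ℤ/p^m)`. Hence the first component `f` of a morphism to `T_2^{m,r}` satisfies
`p² f(A) = 0` and `p f(A ∩ p^r B) = 0`, the extension criterion says that every such `f` occurs,
and the second component is determined by `f` up to a homomorphism killing `A`, that is, a
morphism to `P_0^r`. The four other cardinalities are the indices of `N_u + p^v B` with
`N_u = p²A + p(A ∩ p^u B)`, `u ∈ {0, r}` and `v ∈ {r + 1, m}`, and two telescoping arguments,
in `u` and in `v`, compare them.
-/

section ZModDuality

lemma hasEnoughRootsOfUnity_multiplicative_zmod (n : ℕ) [NeZero n] :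
    HasEnoughRootsOfUnity (Multiplicative (ZMod n)) n where
  prim := by
    refine ⟨.ofAdd 1, ?_⟩
    simpa only [orderOf_ofAdd_eq_addOrderOf, ZMod.addOrderOf_one] using
      IsPrimitiveRoot.orderOf (Multiplicative.ofAdd (1 : ZMod n))
  cyc :=
    have : IsCyclic (Multiplicative (ZMod n))ˣ :=
      isCyclic_of_surjective (toUnits (G := Multiplicative (ZMod n))) toUnits.surjective
    inferInstance

variable {G : Type*} [AddCommGroup G] {n : ℕ} [NeZero n]

lemma hasEnoughRootsOfUnity_exponent_of_nsmul_eq_zero (hG : ∀ x : G, n • x = 0) :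
    HasEnoughRootsOfUnity (Multiplicative (ZMod n)) (Monoid.exponent (Multiplicative G)) :=
  have := hasEnoughRootsOfUnity_multiplicative_zmod n
  .of_dvd _ (n := n) <| Monoid.exponent_dvd_of_forall_pow_eq_one fun x => hG x.toAdd

variable [Finite G]

lemma card_addMonoidHom_zmod (hG : ∀ x : G, n • x = 0) :
    Nat.card (G →+ ZMod n) = Nat.card G := by
  have := hasEnoughRootsOfUnity_exponent_of_nsmul_eq_zero hG
  calc Nat.card (G →+ ZMod n)
      = Nat.card (Multiplicative G →* (Multiplicative (ZMod n))ˣ) :=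
        Nat.card_congr (AddMonoidHom.toMultiplicative.trans toUnits.monoidHomCongrRightEquiv)
    _ = Nat.card (Multiplicative G) :=
        CommGroup.card_monoidHom_of_hasEnoughRootsOfUnity _ _
    _ = Nat.card G := Nat.card_congr Multiplicative.toAdd

lemma domRestrictHom_zmod_surjective (hG : ∀ x : G, n • x = 0) (H : AddSubgroup G) :
    Function.Surjective (AddMonoidHom.domRestrictHom H (ZMod n)) := by
  have := hasEnoughRootsOfUnity_exponent_of_nsmul_eq_zero hG
  intro φ
  obtain ⟨g, hg⟩ := MonoidHom.domRestrict_surjective (Multiplicative (ZMod n)) H.toSubgroup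
    (toUnits.toMonoidHom.comp (AddMonoidHom.toMultiplicative φ))
  refine ⟨AddMonoidHom.toMultiplicative.symm (toUnits.symm.toMonoidHom.comp g), ?_⟩
  ext x
  exact congrArg (fun z => (toUnits.symm z).toAdd) (DFunLike.congr_fun hg x)

end ZModDuality

section MultiplicationMaps

variable {B : Type} [AddCommGroup B]

lemma pMul_apply (k : ℕ) (x : B) : pMul k B x = k • x := rfl

lemma nsmul_mem_range_pMul (k : ℕ) (x : B) : k • x ∈ (pMul k B).range := ⟨x, rfl⟩

lemma pMul_mul (k l : ℕ) : pMul (k * l) B = (pMul k B).comp (pMul l B) := by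
  ext x
  exact mul_nsmul' x k l

lemma range_pMul_le_of_dvd {k l : ℕ} (h : k ∣ l) : (pMul l B).range ≤ (pMul k B).range := by
  obtain ⟨c, rfl⟩ := h
  rw [pMul_mul, AddMonoidHom.range_comp]
  exact AddSubgroup.map_le_range _ _

lemma range_pMul_pow_antitone (p : ℕ) : Antitone fun i => (pMul (p ^ i) B).range :=
  fun _ _ h => range_pMul_le_of_dvd (pow_dvd_pow p h)

lemma range_pMul_one : (pMul 1 B).range = ⊤ :=
  AddMonoidHom.range_eq_top.2 fun x => ⟨x, one_nsmul x⟩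

lemma nsmul_quotient_eq_zero {n : ℕ} {H : AddSubgroup B} (hH : (pMul n B).range ≤ H) (x : B ⧸ H) :
    n • x = 0 := by
  induction x using QuotientAddGroup.induction_on with
  | H x => exact (QuotientAddGroup.eq_zero_iff (n • x)).2 (hH (nsmul_mem_range_pMul n x))

lemma finiteIndex_range_pMul_mul {k l : ℕ} [(pMul k B).range.FiniteIndex]
    [(pMul l B).range.FiniteIndex] : (pMul (k * l) B).range.FiniteIndex := by
  have : ((pMul l B).range ⊔ (pMul k B).ker).FiniteIndex :=
    AddSubgroup.finiteIndex_of_le le_sup_left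
  constructor
  rw [pMul_mul, AddMonoidHom.range_comp, AddSubgroup.index_map]
  exact mul_ne_zero AddSubgroup.FiniteIndex.index_ne_zero AddSubgroup.FiniteIndex.index_ne_zero

lemma finiteIndex_range_pMul_pow {p : ℕ} [(pMul p B).range.FiniteIndex] (i : ℕ) :
    (pMul (p ^ i) B).range.FiniteIndex := by
  induction i with
  | zero => rw [pow_zero, range_pMul_one]; infer_instance
  | succ i ih => exact finiteIndex_range_pMul_mul

lemma range_pMul_quotient (N : AddSubgroup B) (k : ℕ) :
    (pMul k (B ⧸ N)).range = (pMul k B).range.map (QuotientAddGroup.mk' N) := by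
  have naturality : (pMul k (B ⧸ N)).comp (QuotientAddGroup.mk' N) =
      (QuotientAddGroup.mk' N).comp (pMul k B) := rfl
  rw [← AddMonoidHom.range_comp, ← naturality, AddMonoidHom.range_comp,
    QuotientAddGroup.range_mk', AddMonoidHom.range_eq_map]

lemma relIndex_range_pMul_quotient (N : AddSubgroup B) (k l : ℕ) :
    (pMul k (B ⧸ N)).range.relIndex (pMul l (B ⧸ N)).range =
      (N ⊔ (pMul k B).range).relIndex (N ⊔ (pMul l B).range) := by
  have absorb : (pMul l (B ⧸ N)).range =
      (N ⊔ (pMul l B).range).map (QuotientAddGroup.mk' N) := by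
    rw [AddSubgroup.map_sup, QuotientAddGroup.map_mk'_self, bot_sup_eq, range_pMul_quotient]
  rw [absorb, range_pMul_quotient, ← AddSubgroup.relIndex_comap, AddSubgroup.comap_map_eq,
    QuotientAddGroup.ker_mk', sup_comm]

end MultiplicationMaps

section MorphismsOfPairs

variable {B D X Y : Type*} [AddCommGroup B] [AddCommGroup D] [AddCommGroup X] [AddCommGroup Y]

/-- The group of morphisms of pairs `(A ⊆ B) → (C ⊆ D)`. -/
def pairHom (A : AddSubgroup B) (C : AddSubgroup D) : AddSubgroup (B →+ D) where
  carrier := {f | ∀ a ∈ A, f a ∈ C}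
  zero_mem' _ _ := C.zero_mem
  add_mem' hf hg a ha := C.add_mem (hf a ha) (hg a ha)
  neg_mem' hf a ha := C.neg_mem (hf a ha)

lemma mem_pairHom {A : AddSubgroup B} {C : AddSubgroup D} {f : B →+ D} :
    f ∈ pairHom A C ↔ ∀ a ∈ A, f a ∈ C := Iff.rfl

lemma pairHom_sup (A A' : AddSubgroup B) (C : AddSubgroup D) :
    pairHom (A ⊔ A') C = pairHom A C ⊓ pairHom A' C := by
  ext f
  exact sup_le_iff (c := C.comap f)

lemma mem_pairHom_map_pMul {B : Type} [AddCommGroup B] (A : AddSubgroup B) (C : AddSubgroup D)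
    (k : ℕ) (f : B →+ D) :
    f ∈ pairHom (A.map (pMul k B)) C ↔ ∀ a ∈ A, k • f a ∈ C := by
  simp only [mem_pairHom, AddSubgroup.mem_map, forall_exists_index, and_imp,
    forall_apply_eq_imp_iff₂, pMul_apply, map_nsmul]

lemma card_pairHom_prod (A : AddSubgroup B) (C : AddSubgroup (X × Y)) :
    Nat.card (pairHom A C) =
      Nat.card ((pairHom A C).map (AddMonoidHom.compHom (AddMonoidHom.fst X Y))) *
        Nat.card (pairHom A (C.comap (AddMonoidHom.inr X Y))) := by
  set π := AddMonoidHom.compHom (M := B) (AddMonoidHom.fst X Y)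
  set ι := AddMonoidHom.compHom (M := B) (AddMonoidHom.inr X Y)
  have ι_injective : Function.Injective ι := fun g g' h => by
    ext b
    exact congrArg Prod.snd (DFunLike.congr_fun h b)
  have kernel_eq : pairHom A C ⊓ π.ker = (pairHom A (C.comap (AddMonoidHom.inr X Y))).map ι := by
    ext f
    constructor
    · rintro ⟨hf, hf'⟩
      have f_eq : ι ((AddMonoidHom.snd X Y).comp f) = f := by
        ext b
        · exact (DFunLike.congr_fun hf' b).symm
        · rfl
      refine ⟨(AddMonoidHom.snd X Y).comp f, fun a ha => ?_, f_eq⟩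
      change ι ((AddMonoidHom.snd X Y).comp f) a ∈ C
      exact f_eq.symm ▸ hf a ha
    · rintro ⟨g, hg, rfl⟩
      exact ⟨hg, rfl⟩
  rw [← AddSubgroup.card_map_of_injective ι_injective, ← kernel_eq, ← AddSubgroup.relIndex_ker,
    ← AddSubgroup.relIndex_bot_left, ← AddSubgroup.relIndex_bot_left, inf_comm, mul_comm,
    AddSubgroup.relIndex_inf_mul_relIndex, bot_inf_eq]

end MorphismsOfPairs

section ZModTargets

variable {B : Type} [AddCommGroup B] {n : ℕ} [NeZero n] [(pMul n B).range.FiniteIndex]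

lemma card_pairHom_bot (H : AddSubgroup B) :
    Nat.card (pairHom H (⊥ : AddSubgroup (ZMod n))) = (H ⊔ (pMul n B).range).index := by
  have : (H ⊔ (pMul n B).range).FiniteIndex := AddSubgroup.finiteIndex_of_le le_sup_right
  have range_killed : pairHom (pMul n B).range (⊥ : AddSubgroup (ZMod n)) = ⊤ := by
    refine eq_top_iff.2 fun f _ => ?_
    rintro _ ⟨b, rfl⟩
    simp [pMul_apply]
  have kernel_eq : pairHom H (⊥ : AddSubgroup (ZMod n)) =
      (AddMonoidHom.domRestrictHom (H ⊔ (pMul n B).range) (ZMod n)).ker := by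
    rw [← inf_top_eq (pairHom H _), ← range_killed, ← pairHom_sup]
    ext f
    simp [mem_pairHom, AddMonoidHom.mem_ker, DFunLike.ext_iff]
  rw [kernel_eq, Nat.card_congr (AddMonoidHom.domRestrictHomKerEquiv _ _).toEquiv,
    card_addMonoidHom_zmod (nsmul_quotient_eq_zero le_sup_right), AddSubgroup.index]

lemma exists_addMonoidHom_zmod_extension {A : AddSubgroup B} (φ : A →+ ZMod n)
    (hφ : ∀ a : A, (a : B) ∈ (pMul n B).range → φ a = 0) :
    ∃ g : B →+ ZMod n, ∀ a : A, g a = φ a := by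
  let π := QuotientAddGroup.mk' (pMul n B).range
  let ψ := (π.comp A.subtype).rangeRestrict
  have ker_le : ψ.ker ≤ φ.ker := fun a ha => by
    rw [AddMonoidHom.ker_rangeRestrict] at ha
    exact hφ a ((QuotientAddGroup.eq_zero_iff _).1 ha)
  obtain ⟨g, hg⟩ := domRestrictHom_zmod_surjective (nsmul_quotient_eq_zero le_rfl) _
    (ψ.liftOfSurjective (AddMonoidHom.rangeRestrict_surjective _) ⟨φ, ker_le⟩)
  refine ⟨g.comp π, fun a => (DFunLike.congr_fun hg (ψ a)).trans ?_⟩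
  exact AddMonoidHom.liftOfRightInverse_comp_apply _ _ _ ⟨φ, ker_le⟩ a

variable {X : Type*} [AddCommGroup X] {C : AddSubgroup (X × ZMod n)}

-- The hypothesis on `C` makes it the graph of a homomorphism from its first projection.
lemma map_fst_pairHom (A : AddSubgroup B) (hC : C.comap (AddMonoidHom.inr X (ZMod n)) = ⊥) :
    (pairHom A C).map (AddMonoidHom.compHom (AddMonoidHom.fst X (ZMod n))) =
      pairHom A (C.map (AddMonoidHom.fst X (ZMod n))) ⊓
        pairHom (A ⊓ (pMul n B).range) (C.comap (AddMonoidHom.inl X (ZMod n))) := by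
  have snd_unique {x : X} {y y' : ZMod n} (h : (x, y) ∈ C) (h' : (x, y') ∈ C) : y = y' := by
    have : y - y' ∈ C.comap (AddMonoidHom.inr X (ZMod n)) := by
      simpa using C.sub_mem h h'
    simpa [hC, sub_eq_zero] using this
  ext f
  constructor
  · rintro ⟨t, ht, rfl⟩
    refine ⟨fun a ha => ⟨t a, ht a ha, rfl⟩, ?_⟩
    rintro _ ⟨ha, b, rfl⟩
    have snd_eq_zero : (t (pMul n B b)).2 = 0 := by simp [pMul_apply]
    simpa [← snd_eq_zero] using ht _ ha
  · rintro ⟨hf, hf'⟩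
    have lift (a : A) : ∃ y, (f a, y) ∈ C := by
      obtain ⟨⟨_, y⟩, hy, rfl⟩ := hf a a.2
      exact ⟨y, hy⟩
    choose y hy using lift
    let φ : A →+ ZMod n := .mk' y fun a b => snd_unique (hy (a + b)) <| by
      simpa using C.add_mem (hy a) (hy b)
    obtain ⟨g, hg⟩ := exists_addMonoidHom_zmod_extension φ fun a ha =>
      snd_unique (hy a) (hf' a ⟨a.2, ha⟩)
    refine ⟨f.prod g, fun a ha => ?_, rfl⟩
    change (f a, g a) ∈ C
    exact (hg ⟨a, ha⟩).symm ▸ hy ⟨a, ha⟩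

end ZModTargets

section Pickets

/-- The subgroup of `ℤ/p^j` in the picket `P_l^j`, for `l ≤ j`. -/
def picket (p j l : ℕ) : AddSubgroup (ZMod (p ^ j)) :=
  AddSubgroup.zmultiples ((p : ZMod (p ^ j)) ^ (j - l))

/-- The cyclic subgroup of `ℤ/p^m ⊕ ℤ/p^r` in the bipicket `T_2^{m,r}`, for `2 ≤ m` and
`1 ≤ r`. -/
def bipicket (p m r : ℕ) : AddSubgroup (ZMod (p ^ m) × ZMod (p ^ r)) :=
  AddSubgroup.zmultiples ((p : ZMod (p ^ m)) ^ (m - 2), (p : ZMod (p ^ r)) ^ (r - 1))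

lemma zsmul_natCast_zmod_eq_zero_iff {a b n : ℕ} (hab : a * b = n) (ha : a ≠ 0) (k : ℤ) :
    k • (a : ZMod n) = 0 ↔ (b : ℤ) ∣ k := by
  have intCast_eq : k • (a : ZMod n) = ((a * k : ℤ) : ZMod n) := by
    push_cast [zsmul_eq_mul]
    exact mul_comm _ _
  rw [intCast_eq, ZMod.intCast_zmod_eq_zero_iff_dvd, ← hab, Nat.cast_mul,
    mul_dvd_mul_iff_left (Nat.cast_ne_zero.2 ha)]

lemma mem_zmultiples_natCast_iff {a b n : ℕ} (hab : a * b = n) (hb : b ≠ 0) (x : ZMod n) :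
    x ∈ AddSubgroup.zmultiples (a : ZMod n) ↔ b • x = 0 := by
  constructor
  · rintro ⟨k, rfl⟩
    change b • k • (a : ZMod n) = 0
    rw [smul_comm, nsmul_eq_mul, ← Nat.cast_mul, mul_comm b, hab, ZMod.natCast_self, smul_zero]
  · intro hx
    obtain ⟨c, rfl⟩ := ZMod.intCast_surjective x
    rw [← zsmul_one, smul_comm, nsmul_one,
      zsmul_natCast_zmod_eq_zero_iff ((mul_comm b a).trans hab) hb] at hx
    obtain ⟨k, rfl⟩ := hx
    exact ⟨k, by simp [mul_comm]⟩

lemma picket_zero (p j : ℕ) : picket p j 0 = ⊥ := by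
  rw [picket, tsub_zero, ← Nat.cast_pow, ZMod.natCast_self, AddSubgroup.zmultiples_zero_eq_bot]

variable {p m r : ℕ}

lemma map_fst_bipicket : (bipicket p m r).map (AddMonoidHom.fst _ _) = picket p m 2 :=
  AddMonoidHom.map_zmultiples _ _

variable [NeZero p]

lemma mem_picket {j l : ℕ} (hl : l ≤ j) {x : ZMod (p ^ j)} :
    x ∈ picket p j l ↔ p ^ l • x = 0 := by
  rw [picket, ← Nat.cast_pow, mem_zmultiples_natCast_iff (pow_sub_mul_pow p hl) NeZero.out]

lemma nsmul_fst_eq_zero_iff_of_mem_bipicket (hm : 2 ≤ m) (hr : 1 ≤ r)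
    {x : ZMod (p ^ m) × ZMod (p ^ r)} (hx : x ∈ bipicket p m r) : p • x.1 = 0 ↔ x.2 = 0 := by
  obtain ⟨k, rfl⟩ := hx
  have hp : p ≠ 0 := NeZero.out
  have fst_eq : p • (k • (p : ZMod (p ^ m)) ^ (m - 2)) =
      k • ((p ^ (m - 1) : ℕ) : ZMod (p ^ m)) := by
    rw [smul_comm, nsmul_eq_mul, ← pow_succ', show m - 2 + 1 = m - 1 by omega, Nat.cast_pow]
  change p • (k • (p : ZMod (p ^ m)) ^ (m - 2)) = 0 ↔ k • (p : ZMod (p ^ r)) ^ (r - 1) = 0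
  rw [fst_eq, ← Nat.cast_pow,
    zsmul_natCast_zmod_eq_zero_iff (pow_sub_one_mul (by omega) p) (pow_ne_zero _ hp),
    zsmul_natCast_zmod_eq_zero_iff (pow_sub_one_mul (by omega) p) (pow_ne_zero _ hp)]

lemma comap_inr_bipicket (hm : 2 ≤ m) (hr : 1 ≤ r) :
    (bipicket p m r).comap (AddMonoidHom.inr _ _) = ⊥ :=
  (AddSubgroup.eq_bot_iff_forall _).2 fun _ hy =>
    (nsmul_fst_eq_zero_iff_of_mem_bipicket hm hr hy).1 (smul_zero p)

lemma comap_inl_bipicket (hm : 2 ≤ m) (hr : 1 ≤ r) :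
    (bipicket p m r).comap (AddMonoidHom.inl _ _) = picket p m 1 := by
  ext x
  rw [mem_picket (by omega), pow_one]
  constructor
  · intro hx
    exact (nsmul_fst_eq_zero_iff_of_mem_bipicket hm hr hx).2 rfl
  · intro hx
    have mem_two : x ∈ picket p m 2 := by
      rw [mem_picket hm, pow_two, mul_nsmul, hx, smul_zero]
    rw [← map_fst_bipicket (r := r)] at mem_two
    obtain ⟨⟨x, y⟩, hxy, rfl⟩ := mem_two
    obtain rfl : y = 0 := (nsmul_fst_eq_zero_iff_of_mem_bipicket hm hr hxy).1 hx
    exact hxy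

end Pickets

section KleinSubgroups

variable {B : Type} [AddCommGroup B] (p : ℕ) (A : AddSubgroup B)

/-- The subgroup `N_u = p²A + p(A ∩ p^u B)`. The quotients `B ⧸ N_u` are the groups `M_u` from
which the entries `2_u` of the Klein tableau of `(A ⊆ B)` are read off. -/
def kleinSubgroup (u : ℕ) : AddSubgroup B :=
  A.map (pMul (p ^ 2) B) ⊔ (A ⊓ (pMul (p ^ u) B).range).map (pMul p B)

lemma kleinSubgroup_zero : kleinSubgroup p A 0 = A.map (pMul (p ^ 1) B) := by
  have sq_le : A.map (pMul (p ^ 2) B) ≤ A.map (pMul p B) := by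
    rintro _ ⟨a, ha, rfl⟩
    exact ⟨p • a, A.nsmul_mem ha p, by simp only [pMul_apply, pow_two, mul_nsmul]⟩
  rw [kleinSubgroup, pow_zero, range_pMul_one, inf_top_eq, pow_one, sup_eq_right.2 sq_le]

lemma kleinSubgroup_antitone : Antitone (kleinSubgroup p A) := fun _ _ h =>
  sup_le_sup_left (AddSubgroup.map_mono (inf_le_inf_left _ (range_pMul_pow_antitone p h))) _

lemma kleinSubgroup_sup_range_pMul_succ (u : ℕ) :
    kleinSubgroup p A u ⊔ (pMul (p ^ (u + 1)) B).range =
      A.map (pMul (p ^ 2) B) ⊔ (pMul (p ^ (u + 1)) B).range := by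
  have absorbed : (A ⊓ (pMul (p ^ u) B).range).map (pMul p B) ≤ (pMul (p ^ (u + 1)) B).range := by
    rw [pow_succ', pMul_mul, AddMonoidHom.range_comp]
    exact AddSubgroup.map_mono inf_le_right
  rw [kleinSubgroup, sup_assoc, sup_eq_right.2 absorbed]

variable {p}

lemma pairHom_picket [NeZero p] {j l : ℕ} (hl : l ≤ j) :
    pairHom A (picket p j l) = pairHom (A.map (pMul (p ^ l) B)) ⊥ := by
  ext f
  rw [mem_pairHom_map_pMul]
  exact forall₂_congr fun _ _ => mem_picket hl

lemma card_pairHom_picket [NeZero p] {j l : ℕ} [(pMul (p ^ j) B).range.FiniteIndex] (hl : l ≤ j) :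
    Nat.card (pairHom A (picket p j l)) =
      (A.map (pMul (p ^ l) B) ⊔ (pMul (p ^ j) B).range).index := by
  rw [pairHom_picket A hl, card_pairHom_bot]

lemma card_pairHom_bipicket [NeZero p] {m r : ℕ} [(pMul (p ^ m) B).range.FiniteIndex]
    [(pMul (p ^ r) B).range.FiniteIndex] (hm : 2 ≤ m) (hr : 1 ≤ r) :
    Nat.card (pairHom A (bipicket p m r)) =
      (kleinSubgroup p A r ⊔ (pMul (p ^ m) B).range).index *
        Nat.card (pairHom A (picket p r 0)) := by
  have comap_inr_eq_bot := comap_inr_bipicket (p := p) hm hr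
  rw [card_pairHom_prod, map_fst_pairHom A comap_inr_eq_bot, comap_inr_eq_bot, picket_zero,
    map_fst_bipicket, comap_inl_bipicket hm hr, pairHom_picket _ hm,
    pairHom_picket _ (one_le_two.trans hm), pow_one, ← pairHom_sup, ← kleinSubgroup,
    card_pairHom_bot]

end KleinSubgroups

section Telescoping

variable {G : Type*} [AddCommGroup G] {q : ℕ}

lemma index_eq_pow_sum_mul_index {R : ℕ → AddSubgroup G} (hR : Antitone R) {d : ℕ → ℕ}
    (hd : ∀ v, (R v).relIndex (R (v - 1)) = q ^ d v) {i j : ℕ} (hij : i ≤ j) :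
    (R j).index = q ^ (∑ v ∈ Finset.Icc (i + 1) j, d v) * (R i).index := by
  induction j, hij using Nat.le_induction with
  | base => simp
  | succ j hij ih =>
    rw [Finset.sum_Icc_succ_top (by omega), pow_add, mul_right_comm, ← ih, ← hd,
      Nat.add_sub_cancel, mul_comm, AddSubgroup.relIndex_mul_index (hR j.le_succ)]

lemma relIndex_sup_dvd_relIndex_sup {H H' X Y : AddSubgroup G} (hH : H ≤ H') (hYX : Y ≤ X) :
    (H' ⊔ Y).relIndex (H' ⊔ X) ∣ (H ⊔ Y).relIndex (H ⊔ X) := by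
  have sup_eq : H' ⊔ X = (H ⊔ X) ⊔ (H' ⊔ Y) := by
    rw [sup_sup_sup_comm, sup_eq_right.2 hH, sup_eq_left.2 hYX]
  rw [sup_eq, AddSubgroup.relIndex_sup_right]
  exact AddSubgroup.relIndex_dvd_of_le_left _ (sup_le_sup_right hH _)

lemma sum_Icc_one_tsub_add {f : ℕ → ℕ} (hf : Monotone f) (n : ℕ) :
    ∑ u ∈ Finset.Icc 1 n, (f u - f (u - 1)) + f 0 = f n := by
  induction n with
  | zero => simp
  | succ n ih =>
    have : f n ≤ f (n + 1) := hf n.le_succ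
    rw [Finset.sum_Icc_succ_top (by omega), Nat.add_sub_cancel]
    omega

lemma index_sup_mul_index_sup (hq : 1 < q) {K R : ℕ → AddSubgroup G} (hK : Antitone K)
    (hR : Antitone R) {D : ℕ → ℕ → ℕ}
    (hD : ∀ u v, (K u ⊔ R v).relIndex (K u ⊔ R (v - 1)) = q ^ D u v) (r : ℕ) {i j : ℕ}
    (hij : i ≤ j) :
    (K r ⊔ R j).index * (K 0 ⊔ R i).index =
      q ^ (∑ v ∈ Finset.Icc (i + 1) j, ∑ u ∈ Finset.Icc 1 r, (D u v - D (u - 1) v)) *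
        ((K r ⊔ R i).index * (K 0 ⊔ R j).index) := by
  have D_mono (v : ℕ) : Monotone (D · v) := fun u u' h => by
    rw [← Nat.pow_dvd_pow_iff_le_right hq, ← hD, ← hD]
    exact relIndex_sup_dvd_relIndex_sup (hK h) (hR (v.sub_le 1))
  have index_eq (u : ℕ) := index_eq_pow_sum_mul_index (R := (K u ⊔ R ·))
    (fun _ _ h => sup_le_sup_left (hR h) _) (hD u) hij
  have sum_eq : ∑ v ∈ Finset.Icc (i + 1) j, D r v =
      ∑ v ∈ Finset.Icc (i + 1) j, ∑ u ∈ Finset.Icc 1 r, (D u v - D (u - 1) v) +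
        ∑ v ∈ Finset.Icc (i + 1) j, D 0 v := by
    rw [← Finset.sum_add_distrib]
    exact Finset.sum_congr rfl fun v _ => (sum_Icc_one_tsub_add (D_mono v) r).symm
  rw [index_eq r, index_eq 0, sum_eq, pow_add]
  ring

end Telescoping

lemma finiteIndex_range_pMul_of_relIndex {B : Type} [AddCommGroup B] {p : ℕ} (A : AddSubgroup B)
    (h : (pMul (p ^ 1) (B ⧸ kleinSubgroup p A 0)).range.relIndex
      (pMul (p ^ 0) (B ⧸ kleinSubgroup p A 0)).range ≠ 0) : (pMul p B).range.FiniteIndex := by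
  have le_range : kleinSubgroup p A 0 ≤ (pMul p B).range := by
    rw [kleinSubgroup_zero, pow_one]
    exact AddSubgroup.map_le_range _ _
  constructor
  rwa [relIndex_range_pMul_quotient, pow_zero, range_pMul_one, sup_top_eq,
    AddSubgroup.relIndex_top_right, pow_one, sup_eq_right.2 le_range] at h

theorem stmt_18_general {p : ℕ} (hp : 1 < p) {B : Type} [AddCommGroup B] (A : AddSubgroup B)
    {m r : ℕ} (hr : 1 ≤ r) (hrm : r < m) (D : ℕ → ℕ → ℕ)
    (hD : ∀ u v, (pMul (p ^ v) (B ⧸ kleinSubgroup p A u)).range.relIndex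
      (pMul (p ^ (v - 1)) (B ⧸ kleinSubgroup p A u)).range = p ^ D u v) :
    Nat.card (pairHom A (bipicket p m r)) * Nat.card (pairHom A (picket p (r + 1) 1)) =
      p ^ (∑ v ∈ Finset.Icc (r + 2) m, ∑ u ∈ Finset.Icc 1 r, (D u v - D (u - 1) v)) *
        (Nat.card (pairHom A (picket p (r + 1) 2)) * Nat.card (pairHom A (picket p r 0)) *
          Nat.card (pairHom A (picket p m 1))) := by
  have : NeZero p := ⟨by omega⟩
  have : (pMul p B).range.FiniteIndex :=
    finiteIndex_range_pMul_of_relIndex A (hD 0 1 ▸ NeZero.ne _)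
  have finiteIndex := finiteIndex_range_pMul_pow (B := B) (p := p)
  have index_identity := index_sup_mul_index_sup hp (kleinSubgroup_antitone p A)
    (range_pMul_pow_antitone (B := B) p)
    (fun u v => (relIndex_range_pMul_quotient _ _ _).symm.trans (hD u v)) r
    (Nat.succ_le_of_lt hrm)
  rw [kleinSubgroup_zero, kleinSubgroup_sup_range_pMul_succ] at index_identity
  rw [card_pairHom_bipicket A (by omega) hr, card_pairHom_picket A (j := m) (by omega),
    card_pairHom_picket A (l := 1) (by omega), card_pairHom_picket A (l := 2) (by omega),
    mul_right_comm, index_identity]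
  ring

/-- For a pair `(A ⊆ B)` of finite abelian `p`-groups and `1 ≤ r ≤ m-2`, with
`M_u = B/(p²A + p(A ∩ p^u B))`, `D u v = dim_{𝔽_p}(p^{v-1}M_u / p^v M_u)` and
`b = Σ_{v=r+2}^m Σ_{u=1}^r (D u v - D (u-1) v)`, the cardinalities of the morphism sets
of pairs satisfy
`#Hom((A⊆B), T_2^{m,r}) · #Hom((A⊆B), P_1^{r+1})
  = p^b · #Hom((A⊆B), P_2^{r+1}) · #Hom((A⊆B), P_0^r) · #Hom((A⊆B), P_1^m)`. -/
theorem stmt_18 (p : ℕ) (hp : p.Prime) (B : Type) [AddCommGroup B] [Fintype B]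
    (hB : ∀ x : B, ∃ n : ℕ, p ^ n • x = 0)
    (A : AddSubgroup B) (m r : ℕ) (h1 : 1 ≤ r) (h2 : r + 2 ≤ m)
    (N : ℕ → AddSubgroup B)
    (hN : ∀ u, N u =
      A.map (pMul (p ^ 2) B) ⊔ (A ⊓ (pMul (p ^ u) B).range).map (pMul p B))
    (D : ℕ → ℕ → ℕ)
    (hD : ∀ u v, Nat.card
        ((pMul (p ^ (v - 1)) (B ⧸ N u)).range ⧸
          ((pMul (p ^ v) (B ⧸ N u)).range.addSubgroupOf
            (pMul (p ^ (v - 1)) (B ⧸ N u)).range)) = p ^ D u v)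
    (b : ℕ)
    (hb : b = ∑ v ∈ Finset.Icc (r + 2) m, ∑ u ∈ Finset.Icc 1 r, (D u v - D (u - 1) v)) :
    Nat.card {f : B →+ (ZMod (p ^ m) × ZMod (p ^ r)) //
        ∀ a ∈ A, f a ∈ AddSubgroup.zmultiples
          ((p : ZMod (p ^ m)) ^ (m - 2), (p : ZMod (p ^ r)) ^ (r - 1))} *
      Nat.card {f : B →+ ZMod (p ^ (r + 1)) //
        ∀ a ∈ A, f a ∈ AddSubgroup.zmultiples ((p : ZMod (p ^ (r + 1))) ^ (r + 1 - 1))} =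
    p ^ b *
      (Nat.card {f : B →+ ZMod (p ^ (r + 1)) //
          ∀ a ∈ A, f a ∈ AddSubgroup.zmultiples ((p : ZMod (p ^ (r + 1))) ^ (r + 1 - 2))} *
        Nat.card {f : B →+ ZMod (p ^ r) //
          ∀ a ∈ A, f a ∈ AddSubgroup.zmultiples ((p : ZMod (p ^ r)) ^ (r - 0))} *
        Nat.card {f : B →+ ZMod (p ^ m) //
          ∀ a ∈ A, f a ∈ AddSubgroup.zmultiples ((p : ZMod (p ^ m)) ^ (m - 1))}) := by
  obtain rfl : N = kleinSubgroup p A := funext hN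
  subst hb
  exact stmt_18_general hp.one_lt A h1 (by omega) D hD
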